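/- arXiv:2007.15725 — 4 statements merged into one kernel-verified Lean document; each statement's English description precedes it below -/
import Mathlib

section
/- Let p ∈ I and S' ⊆ J with |S'∖S_p| ≤ u − 1, and assume p < m or |S_m| < n − l. If S_p ⊆ S', |S'∖S_{p−1}| ≥ u whenever p ≥ 2, |S'| ≥ u + 1, and S' ∩ (S_{p+1}∖S_p) ≠ ∅ whenever p ≤ m − 1, then the mixing inequality Mix≤(S',p) defines a facet of conv(X^{l,u}). -/
open Finset

noncomputable section

def Xset (n m l u : ℕ) (S : Fin m → Finset (Fin n)) : Set ((Fin n → ℝ) × (Fin m → ℝ)) :=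
  {zd | (∀ j, zd.1 j = 0 ∨ zd.1 j = 1) ∧ (∀ i, zd.2 i = 0 ∨ zd.2 i = 1) ∧
        (∀ i, zd.2 i = ∏ j ∈ S i, (1 - zd.1 j)) ∧
        (l : ℝ) ≤ ∑ j, zd.1 j ∧ ∑ j, zd.1 j ≤ (u : ℝ)}

def Dset (n m l u : ℕ) (S : Fin m → Finset (Fin n)) : Set (Fin m → ℝ) :=
  Prod.snd '' Xset n m l u S

def Xfiber (n m l u : ℕ) (S : Fin m → Finset (Fin n)) (δ : Fin m → ℝ) :
    Set (Fin n → ℝ) :=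
  {z | (z, δ) ∈ Xset n m l u S}

/-- The family is closed under nonempty intersection. -/
def ClosedInter (n m : ℕ) (S : Fin m → Finset (Fin n)) : Prop :=
  ∀ i j : Fin m, (S i ∩ S j).Nonempty → ∃ k, S i ∩ S j = S k

/-- The family is proper. -/
def ProperFam (n m l u : ℕ) (S : Fin m → Finset (Fin n)) : Prop :=
  ClosedInter n m S ∧
  ∃ D : Finset (Fin m → ℝ), (D : Set (Fin m → ℝ)) = Dset n m l u S ∧ D.card = m + 1 ∧
    AffineIndependent ℝ (Subtype.val : {x : Fin m → ℝ // x ∈ D} → (Fin m → ℝ))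

/-- `f x ≤ c` is valid and defines a facet of `conv P`. -/
def IsFacet {E : Type*} [AddCommGroup E] [Module ℝ E] (P : Set E) (f : E → ℝ) (c : ℝ) :
    Prop :=
  (∀ x ∈ P, f x ≤ c) ∧
  Module.finrank ℝ (affineSpan ℝ {x ∈ convexHull ℝ P | f x = c}).direction + 1 =
    Module.finrank ℝ (affineSpan ℝ P).direction

def SS (n m : ℕ) (S : Fin m → Finset (Fin n)) : ℕ → Finset (Fin n) :=
  fun k => if h : 1 ≤ k ∧ k ≤ m then S ⟨k - 1, by omega⟩ else if k = 0 then ∅ else Finset.univ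

def dd (m : ℕ) (δ : Fin m → ℝ) : ℕ → ℝ :=
  fun k => if h : 1 ≤ k ∧ k ≤ m then δ ⟨k - 1, by omega⟩ else if k = 0 then 1 else 0

def mixLeLHS (n m u : ℕ) (S : Fin m → Finset (Fin n)) (p : ℕ) (S' : Finset (Fin n))
    (zd : (Fin n → ℝ) × (Fin m → ℝ)) : ℝ :=
  ∑ j ∈ S', zd.1 j + ((u : ℝ) - ((S' \ SS n m S p).card : ℝ)) * dd m zd.2 p
    + ∑ i ∈ Finset.Icc (p + 1) m,
        (((S' \ SS n m S (i - 1)).card : ℝ) - ((S' \ SS n m S i).card : ℝ)) * dd m zd.2 i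

def MixLe (n m u : ℕ) (S : Fin m → Finset (Fin n)) (p : ℕ) (S' : Finset (Fin n))
    (zd : (Fin n → ℝ) × (Fin m → ℝ)) : Prop :=
  mixLeLHS n m u S p S' zd ≤ (u : ℝ)

def mixGeLHS (n m l : ℕ) (S : Fin m → Finset (Fin n)) (p : ℕ) (S' : Finset (Fin n))
    (zd : (Fin n → ℝ) × (Fin m → ℝ)) : ℝ :=
  (((S' ∪ SS n m S p).card : ℝ) - (n : ℝ) + (l : ℝ)) * dd m zd.2 p
    + ∑ i ∈ Finset.Icc (p + 1) m,
        (((S' ∪ SS n m S i).card : ℝ) - ((S' ∪ SS n m S (i - 1)).card : ℝ)) * dd m zd.2 i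
    - ∑ j ∈ S', zd.1 j

def MixGe (n m l : ℕ) (S : Fin m → Finset (Fin n)) (p : ℕ) (S' : Finset (Fin n))
    (zd : (Fin n → ℝ) × (Fin m → ℝ)) : Prop :=
  mixGeLHS n m l S p S' zd ≤ 0

def NestedLin (n m l u : ℕ) (S : Fin m → Finset (Fin n))
    (zd : (Fin n → ℝ) × (Fin m → ℝ)) : Prop :=
  ((l : ℝ) ≤ ∑ j, zd.1 j) ∧ (∑ j, zd.1 j ≤ (u : ℝ)) ∧
  (∀ i : Fin m, ∀ j ∈ S i, zd.1 j + zd.2 i ≤ 1) ∧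
  (1 ≤ dd m zd.2 1 + ∑ j ∈ SS n m S 1, zd.1 j) ∧
  (0 ≤ dd m zd.2 m) ∧
  (∀ j, 0 ≤ zd.1 j) ∧
  (∀ j, j ∉ SS n m S m → zd.1 j ≤ 1) ∧
  (∀ i : ℕ, 1 ≤ i → i + 1 ≤ m → dd m zd.2 (i + 1) ≤ dd m zd.2 i) ∧
  (∀ i : ℕ, 1 ≤ i → i + 1 ≤ m →
    dd m zd.2 i - dd m zd.2 (i + 1) ≤ ∑ j ∈ SS n m S (i + 1) \ SS n m S i, zd.1 j)

def FollowsPattern (n : ℕ) (α α' : Fin n → ℝ) : Prop :=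
  (∀ j, (0 ≤ α j → 0 ≤ α' j) ∧ (α j ≤ 0 → α' j ≤ 0)) ∧
  (∀ j₁ j₂ : Fin n, α j₂ ≤ α j₁ → α' j₂ ≤ α' j₁)

def IsFacetSet {E : Type*} [AddCommGroup E] [Module ℝ E] (P : Set E) (F : Set E) : Prop :=
  ∃ (f : E →ₗ[ℝ] ℝ) (c : ℝ), (∀ x ∈ P, f x ≤ c) ∧
    F = {x ∈ convexHull ℝ P | f x = c} ∧
    Module.finrank ℝ (affineSpan ℝ F).direction + 1 =
      Module.finrank ℝ (affineSpan ℝ P).direction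

theorem core15 {n : ℕ} (m l u p : ℕ) (s : ℕ → Finset (Fin n)) (S' : Finset (Fin n))
    (hu : 2 ≤ u) (hlu : l < u) (h0 : s 0 = ∅)
    (hmono : ∀ i j, i ≤ j → j ≤ m → s i ⊆ s j)
    (hstrict : ∀ i, i < m → ∃ e, e ∈ s (i+1) ∧ e ∉ s i)
    (hS1 : 2 ≤ (s 1).card)
    (hSm : l ≤ (univ \ s m).card)
    (hp1 : 1 ≤ p) (hpm : p ≤ m)
    (hS' : (S' \ s p).card ≤ u - 1)
    (hside : p < m ∨ l < (univ \ s m).card)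
    (hU1 : s p ⊆ S')
    (hU2 : 2 ≤ p → u ≤ (S' \ s (p - 1)).card)
    (hU3 : u + 1 ≤ S'.card)
    (hU4 : p < m → (S' ∩ (s (p + 1) \ s p)).Nonempty)
    (A : Fin n → ℝ) (B : ℕ → ℝ) (γ : ℝ) (hB0 : B 0 = 0)
    (H1 : ∀ T k, k < p → T ⊆ S' → T.card = u → Disjoint (s k) T → ¬ Disjoint (s (k+1)) T →
      ∑ j ∈ T, A j + B k = γ)
    (H2 : ∀ T k, p ≤ k → k ≤ m → S' \ s k ⊆ T → l ≤ T.card → T.card ≤ u → Disjoint (s k) T →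
      (k < m → ¬ Disjoint (s (k+1)) T) → ∑ j ∈ T, A j + B k = γ) :
    ∃ a : ℝ, (∀ j, A j = if j ∈ S' then a else 0) ∧
      ∀ k, k ≤ m → B k = if k < p then 0 else a * (u - (S' \ s k).card) := by
  have hs1S : s 1 ⊆ S' := (hmono 1 p hp1 hpm).trans hU1
  -- swap
  have hswap : ∀ j ∈ s 1, ∀ x ∈ S', ∀ y ∈ S', x ≠ j → y ≠ j → A x = A y := by
    intro j hj x hx y hy hxj hyj
    by_cases hxy : x = y
    · rw [hxy]
    have hjS := hs1S hj
    have c1 : ((S'.erase x).erase y).card = S'.card - 2 := by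
      rw [card_erase_of_mem (by simp [hy, Ne.symm hxy]), card_erase_of_mem hx]; omega
    obtain ⟨R, hR1, hR2, hR3⟩ := exists_subsuperset_card_eq (s := {j})
      (t := (S'.erase x).erase y) (n := u - 1)
      (by simp [hjS, Ne.symm hxj, Ne.symm hyj]) (by simp; omega) (by omega)
    have hjR : j ∈ R := hR1 (by simp)
    have hxR : x ∉ R := fun h => by simpa using hR2 h
    have hyR : y ∉ R := fun h => by simpa using hR2 h
    have hRS : R ⊆ S' := fun r hr => by have := hR2 hr; simp at this; tauto
    have key : ∀ w ∈ S', w ∉ R → A w + ∑ i ∈ R, A i = γ := by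
      intro w hw hwR
      have := H1 (insert w R) 0 (by omega) (by
        intro r hr; simp at hr; rcases hr with rfl | hr
        · exact hw
        · exact hRS hr) (by rw [card_insert_of_notMem hwR]; omega) (by simp [h0]) (by
        rw [not_disjoint_iff]; exact ⟨j, by simpa using hj, by simp [hjR]⟩)
      rw [sum_insert hwR, hB0] at this
      linarith
    have := key x hx hxR
    have := key y hy hyR
    linarith
  obtain ⟨j1, hj1, j2, hj2, hj12⟩ := one_lt_card.mp (show 1 < (s 1).card by omega)
  obtain ⟨j3, hj3, hj31, hj32⟩ : ∃ j3 ∈ S', j3 ≠ j1 ∧ j3 ≠ j2 := by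
    have : 0 < ((S'.erase j1).erase j2).card := by
      rw [card_erase_of_mem (by simp [hs1S hj2, Ne.symm hj12]), card_erase_of_mem (hs1S hj1)]; omega
    obtain ⟨x, hx⟩ := card_pos.mp this
    simp at hx
    exact ⟨x, hx.2.2, hx.2.1, hx.1⟩
  set a := A j3 with ha
  have hA : ∀ x ∈ S', A x = a := by
    intro x hx
    by_cases h : x = j1
    · exact hswap j2 hj2 x hx j3 hj3 (by rw [h]; exact hj12) hj32
    · exact hswap j1 hj1 x hx j3 hj3 h hj31
  have hsumS : ∀ T ⊆ S', ∑ j ∈ T, A j = T.card * a := by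
    intro T hT
    rw [sum_congr rfl (fun j hj => hA j (hT hj))]; simp
  have hγ : γ = u * a := by
    obtain ⟨T, hT1, hT2, hT3⟩ := exists_subsuperset_card_eq (s := {j1}) (t := S') (n := u)
      (by simpa using hs1S hj1) (by simp; omega) (by omega)
    have := H1 T 0 (by omega) hT2 hT3 (by simp [h0]) (by
      rw [not_disjoint_iff]; exact ⟨j1, by simpa using hj1, hT1 (by simp)⟩)
    rw [hsumS T hT2, hT3, hB0] at this
    linarith
  have hBlt : ∀ k, k < p → B k = 0 := by
    intro k hk
    obtain ⟨e, he1, he2⟩ := hstrict k (by omega)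
    rcases Nat.eq_zero_or_pos k with rfl | hk0
    · exact hB0
    have hc : u ≤ (S' \ s k).card := (hU2 (by omega)).trans
      (card_le_card (sdiff_subset_sdiff (Subset.refl _) (hmono k (p-1) (by omega) (by omega))))
    obtain ⟨T, hT1, hT2, hT3⟩ := exists_subsuperset_card_eq (s := {e}) (t := S' \ s k) (n := u)
      (by simp [he2]; exact hU1 (hmono (k+1) p (by omega) hpm he1)) (by simp; omega) hc
    have hTS := hT2.trans sdiff_subset
    have := H1 T k hk hTS hT3 (disjoint_of_subset_right hT2 disjoint_sdiff) (by
      rw [not_disjoint_iff]; exact ⟨e, he1, hT1 (by simp)⟩)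
    rw [hsumS T hTS, hT3] at this
    linarith
  have hcl : ∀ k, k < m → l < (univ \ s k).card := by
    intro k hk
    obtain ⟨e, he1, he2⟩ := hstrict k hk
    refine lt_of_le_of_lt hSm (card_lt_card ?_)
    rw [ssubset_iff_of_subset (sdiff_subset_sdiff (Subset.refl _) (hmono k m hk.le le_rfl))]
    exact ⟨e, by simp [he2], by simpa using hmono (k+1) m hk le_rfl he1⟩
  have hclp : l < (univ \ s p).card := by
    rcases hside with h | h
    · exact hcl p h
    · rcases hpm.lt_or_eq with h' | h'
      · exact hcl p h'
      · rw [h']; exact h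
  have hout : ∀ j, j ∉ S' → A j = 0 := by
    intro j hj
    have hjp : j ∉ s p := fun h => hj (hU1 h)
    have hsub : S' \ s p ⊆ (univ \ s p).erase j := by
      intro x hx; simp at hx ⊢
      exact ⟨fun h => hj (h ▸ hx.1), hx.2⟩
    have hce : ((univ \ s p).erase j).card = (univ \ s p).card - 1 :=
      card_erase_of_mem (by simp [hjp])
    obtain ⟨R, hR1, hR2, hR3⟩ := exists_subsuperset_card_eq (n := max l (S' \ s p).card) hsub
      (by omega) (by have := card_le_card hsub; omega)
    have hjR : j ∉ R := fun h => by simpa using hR2 h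
    have hd : Disjoint (s p) R := by
      refine disjoint_of_subset_right (hR2.trans (erase_subset _ _)) disjoint_sdiff
    have hnd : ∀ T, R ⊆ T → p < m → ¬ Disjoint (s (p+1)) T := by
      intro T hT h
      obtain ⟨e, he⟩ := hU4 h
      simp at he
      rw [not_disjoint_iff]
      exact ⟨e, he.2.1, hT (hR1 (by simp [he]))⟩
    have e1 := H2 R p le_rfl hpm hR1 (by omega) (by omega) hd (hnd R (Subset.refl _))
    have e2 := H2 (insert j R) p le_rfl hpm (hR1.trans (subset_insert _ _))
      (by rw [card_insert_of_notMem hjR]; omega) (by rw [card_insert_of_notMem hjR]; omega)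
      (by simp [hjp, hd]) (hnd _ (subset_insert _ _))
    rw [sum_insert hjR] at e2
    linarith
  have hBge : ∀ k, p ≤ k → k ≤ m → B k = a * (u - (S' \ s k).card) := by
    intro k hk hkm
    have main : ∀ C : Finset (Fin n), S' \ s k ⊆ C → C ⊆ univ \ s k → C.card ≤ u →
        (k < m → ¬ Disjoint (s (k+1)) C) → B k = a * (u - (S' \ s k).card) := by
      intro C hC1 hC2 hC3 hC4
      obtain ⟨T, hT1, hT2, hT3⟩ := exists_subsuperset_card_eq (n := max l C.card) hC2
        (by omega) (by
          have := card_le_card hC2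
          have := card_le_card (sdiff_subset_sdiff (Subset.refl univ) (hmono k m hkm le_rfl))
          omega)
      have := H2 T k hk hkm (hC1.trans hT1) (by omega) (by omega)
        (disjoint_of_subset_right hT2 disjoint_sdiff)
        (fun h h' => hC4 h (disjoint_of_subset_right hT1 h'))
      have hs : ∑ j ∈ T, A j = ∑ j ∈ S' \ s k, A j := by
        symm
        apply sum_subset (hC1.trans hT1)
        intro x hx hx'
        apply hout
        intro h
        apply hx'
        have := hT2 hx
        simp at this ⊢
        exact ⟨h, this⟩
      rw [hs, hsumS _ sdiff_subset] at this
      linarith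
    rcases hk.lt_or_eq with hk' | rfl
    · have hlt : (S' \ s k).card < (S' \ s p).card := by
        obtain ⟨e, he⟩ := hU4 (by omega)
        simp at he
        apply card_lt_card
        rw [ssubset_iff_of_subset (sdiff_subset_sdiff (Subset.refl _) (hmono p k hk hkm))]
        exact ⟨e, by simp [he], by simp; intro _; exact hmono (p+1) k hk' hkm he.2.1⟩
      by_cases hkm' : k < m
      · obtain ⟨e, he1, he2⟩ := hstrict k hkm'
        refine main (insert e (S' \ s k)) (subset_insert _ _) ?_ ?_ ?_
        · intro x hx; simp at hx ⊢; rcases hx with rfl | hx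
          · exact he2
          · exact hx.2
        · have := card_insert_le e (S' \ s k); omega
        · intro _; rw [not_disjoint_iff]; exact ⟨e, he1, by simp⟩
      · exact main (S' \ s k) (Subset.refl _) (sdiff_subset_sdiff (subset_univ _) (Subset.refl _))
          (by omega) (fun h => absurd h hkm')
    · refine main (S' \ s p) (Subset.refl _) (sdiff_subset_sdiff (subset_univ _) (Subset.refl _))
          (by omega) (fun h => ?_)
      obtain ⟨e, he⟩ := hU4 h
      simp at he
      rw [not_disjoint_iff]
      exact ⟨e, he.2.1, by simp [he]⟩
  refine ⟨a, fun j => ?_, fun k hk => ?_⟩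
  · split_ifs with h
    · exact hA j h
    · exact hout j h
  · split_ifs with h
    · exact hBlt k h
    · exact hBge k (by omega) hk

theorem facet_of15 {E : Type*} [AddCommGroup E] [Module ℝ E] [FiniteDimensional ℝ E]
    (P : Set E) (g : E →ₗ[ℝ] ℝ) (c : ℝ) (hv : ∀ x ∈ P, g x ≤ c)
    (key : ∀ (f : E →ₗ[ℝ] ℝ) (γ : ℝ), (∀ x ∈ P, g x = c → f x = γ) → ∃ a : ℝ, f = a • g)
    (x0 x1 : E) (hx0 : x0 ∈ P) (hx1 : x1 ∈ P) (h0 : g x0 = c) (h1 : g x1 ≠ c) :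
    IsFacet P g c := by
  refine ⟨hv, ?_⟩
  have hg : g ≠ 0 := by
    rintro rfl; simp at h0 h1; exact h1 h0
  rw [direction_affineSpan, direction_affineSpan]
  have e1 : vectorSpan ℝ {x ∈ convexHull ℝ P | g x = c} = LinearMap.ker g := by
    apply le_antisymm
    · rw [vectorSpan_def, Submodule.span_le]
      rintro _ ⟨x, hx, y, hy, rfl⟩
      simp [hx.2, hy.2]
    · intro w hw
      by_contra hn
      obtain ⟨f, hf1, hf2⟩ := Submodule.exists_le_ker_of_notMem hn
      obtain ⟨a, rfl⟩ := key f (f x0) (by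
        intro x hx hxc
        have := hf2 (vsub_mem_vectorSpan ℝ
          (show x ∈ {x ∈ convexHull ℝ P | g x = c} from ⟨subset_convexHull ℝ P hx, hxc⟩)
          (show x0 ∈ {x ∈ convexHull ℝ P | g x = c} from ⟨subset_convexHull ℝ P hx0, h0⟩))
        simp only [vsub_eq_sub, LinearMap.mem_ker, map_sub] at this
        linarith)
      apply hf1
      rw [LinearMap.mem_ker] at hw
      simp [hw]
  have e2 : vectorSpan ℝ P = ⊤ := by
    rw [eq_top_iff]
    intro w _
    by_contra hn
    obtain ⟨f, hf1, hf2⟩ := Submodule.exists_le_ker_of_notMem hn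
    have hc : ∀ x ∈ P, f x = f x0 := by
      intro x hx
      have := hf2 (vsub_mem_vectorSpan ℝ hx hx0)
      simp only [vsub_eq_sub, LinearMap.mem_ker, map_sub] at this
      linarith
    obtain ⟨a, rfl⟩ := key f (f x0) (fun x hx _ => hc x hx)
    have := hc x1 hx1
    simp [h0] at this
    rcases this with h | h
    · exact h1 h
    · apply hf1; simp [h]
  rw [e1, e2, finrank_top]
  exact Module.Dual.finrank_ker_add_one_of_ne_zero hg

def LL15 (m k : ℕ) : Fin m → ℝ := fun i => if i.val < k then 1 else 0

def ind15 {n : ℕ} (T : Finset (Fin n)) : Fin n → ℝ := fun j => if j ∈ T then 1 else 0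

theorem dd_LL15 (m k i : ℕ) (h1 : 1 ≤ i) (h2 : i ≤ m) :
    dd m (LL15 m k) i = if i ≤ k then 1 else 0 := by
  simp only [dd, LL15, h1, h2, and_self, dif_pos]
  congr 1
  simp; omega

theorem SS_succ15 (n m : ℕ) (S : Fin m → Finset (Fin n)) (i : Fin m) :
    SS n m S (i.val + 1) = S i := by
  have := i.isLt
  simp [SS, show i.val + 1 ≤ m by omega]

theorem SS_mono15 (n m : ℕ) (S : Fin m → Finset (Fin n))
    (hnested : ∀ i j : Fin m, i < j → S i ⊂ S j) (i j : ℕ) (hij : i ≤ j) (hj : j ≤ m) :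
    SS n m S i ⊆ SS n m S j := by
  rcases Nat.eq_zero_or_pos i with rfl | hi
  · simp [SS]
  rcases hij.eq_or_lt with rfl | h
  · exact Subset.refl _
  · have := hnested ⟨i - 1, by omega⟩ ⟨j - 1, by omega⟩ (by simp; omega)
    simp only [SS, show 1 ≤ i ∧ i ≤ m by omega, show 1 ≤ j ∧ j ≤ m by omega, and_self, dif_pos]
    exact this.1

theorem SS_strict15 (n m : ℕ) (S : Fin m → Finset (Fin n))
    (hnested : ∀ i j : Fin m, i < j → S i ⊂ S j) (hS1 : 2 ≤ (SS n m S 1).card)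
    (i : ℕ) (hi : i < m) :
    ∃ e, e ∈ SS n m S (i+1) ∧ e ∉ SS n m S i := by
  rcases Nat.eq_zero_or_pos i with rfl | hi0
  · obtain ⟨e, he⟩ := card_pos.mp (show 0 < (SS n m S 1).card by omega)
    exact ⟨e, he, by simp [SS]⟩
  · have := hnested ⟨i - 1, by omega⟩ ⟨i, by omega⟩ (by simp; omega)
    obtain ⟨e, he1, he2⟩ := exists_of_ssubset this
    refine ⟨e, ?_, ?_⟩
    · simpa [SS, show i + 1 ≤ m by omega] using he1
    · simpa only [SS, show 1 ≤ i ∧ i ≤ m by omega, and_self, dif_pos] using he2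

theorem prod_ind15 {n : ℕ} (R T : Finset (Fin n)) :
    ∏ j ∈ R, (1 - ind15 T j) = if Disjoint R T then 1 else 0 := by
  split_ifs with h
  · apply prod_eq_one
    intro j hj
    simp [ind15, disjoint_left.mp h hj]
  · obtain ⟨e, he1, he2⟩ := not_disjoint_iff.mp h
    exact prod_eq_zero he1 (by simp [ind15, he2])

theorem sum_ind15 {n : ℕ} (T : Finset (Fin n)) : ∑ j, ind15 T j = (T.card : ℝ) := by
  simp [ind15]

theorem level15 (n m : ℕ) (S : Fin m → Finset (Fin n))
    (hnested : ∀ i j : Fin m, i < j → S i ⊂ S j) (T : Finset (Fin n)) (k : ℕ) (hk : k ≤ m)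
    (hd : Disjoint (SS n m S k) T) (hnd : k < m → ¬ Disjoint (SS n m S (k+1)) T) (i : Fin m) :
    LL15 m k i = ∏ j ∈ S i, (1 - ind15 T j) := by
  rw [prod_ind15, LL15, ← SS_succ15 n m S i]
  congr 1
  have := i.isLt
  apply propext
  constructor
  · intro h
    exact disjoint_of_subset_left (SS_mono15 n m S hnested _ _ h hk) hd
  · intro h
    by_contra h'
    exact hnd (by omega) (disjoint_of_subset_left (SS_mono15 n m S hnested _ _ (by omega) this) h)

theorem mem_X15 (n m l u : ℕ) (S : Fin m → Finset (Fin n))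
    (hnested : ∀ i j : Fin m, i < j → S i ⊂ S j) (T : Finset (Fin n)) (k : ℕ) (hk : k ≤ m)
    (hd : Disjoint (SS n m S k) T) (hnd : k < m → ¬ Disjoint (SS n m S (k+1)) T)
    (hl : l ≤ T.card) (hu : T.card ≤ u) : (ind15 T, LL15 m k) ∈ Xset n m l u S := by
  refine ⟨fun j => ?_, fun i => ?_, level15 n m S hnested T k hk hd hnd, ?_, ?_⟩
  · simp only [ind15]; split_ifs <;> simp
  · simp only [LL15]; split_ifs <;> simp
  · simp only [sum_ind15]; exact_mod_cast hl
  · simp only [sum_ind15]; exact_mod_cast hu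

theorem of_X15 (n m l u : ℕ) (S : Fin m → Finset (Fin n))
    (hnested : ∀ i j : Fin m, i < j → S i ⊂ S j) (x) (hx : x ∈ Xset n m l u S) :
    ∃ (T : Finset (Fin n)) (k : ℕ), k ≤ m ∧ Disjoint (SS n m S k) T ∧ T.card ≤ u ∧
      x = (ind15 T, LL15 m k) := by
  obtain ⟨z, d⟩ := x
  obtain ⟨h1, h2, h3, h4, h5⟩ := hx
  simp only at h1 h2 h3 h4 h5
  set T : Finset (Fin n) := univ.filter (fun j => z j = 1) with hT
  have hz : z = ind15 T := by
    funext j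
    rcases h1 j with h | h <;> simp [ind15, hT, h]
  classical
  refine ⟨T, Nat.findGreatest (fun i => Disjoint (SS n m S i) T) m, Nat.findGreatest_le _, ?_, ?_, ?_⟩
  · exact Nat.findGreatest_spec (P := fun i => Disjoint (SS n m S i) T) (Nat.zero_le m) (by simp [SS])
  · rw [hz, sum_ind15] at h5; exact_mod_cast h5
  · refine Prod.ext hz (funext fun i => ?_)
    simp only
    rw [h3 i, hz]
    symm
    apply level15 n m S hnested T _ (Nat.findGreatest_le _)
    · exact Nat.findGreatest_spec (P := fun i => Disjoint (SS n m S i) T) (Nat.zero_le m) (by simp [SS])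
    · intro h
      exact Nat.findGreatest_is_greatest (P := fun i => Disjoint (SS n m S i) T) (Nat.lt_succ_self _) h

theorem dd_add15 (m k : ℕ) (hk : 1 ≤ k) (a b : Fin m → ℝ) : dd m (a + b) k = dd m a k + dd m b k := by
  unfold dd
  split_ifs <;> simp
  omega

theorem dd_smul15 (m k : ℕ) (hk : 1 ≤ k) (c : ℝ) (b : Fin m → ℝ) : dd m (c • b) k = c * dd m b k := by
  unfold dd
  split_ifs <;> simp
  omega

def gL15 (n m u : ℕ) (S : Fin m → Finset (Fin n)) (p : ℕ) (hp : 1 ≤ p) (S' : Finset (Fin n)) :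
    ((Fin n → ℝ) × (Fin m → ℝ)) →ₗ[ℝ] ℝ where
  toFun := mixLeLHS n m u S p S'
  map_add' := by
    rintro ⟨x, a⟩ ⟨y, b⟩
    simp only [mixLeLHS, Prod.mk_add_mk, Pi.add_apply, sum_add_distrib, dd_add15 m p hp]
    rw [sum_congr rfl (g := fun i =>
      (((S' \ SS n m S (i - 1)).card : ℝ) - ((S' \ SS n m S i).card : ℝ)) * dd m a i +
      (((S' \ SS n m S (i - 1)).card : ℝ) - ((S' \ SS n m S i).card : ℝ)) * dd m b i)
      (fun i hi => by
        rw [dd_add15 m i (by simp at hi; omega), mul_add]), sum_add_distrib]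
    ring
  map_smul' := by
    rintro c ⟨y, b⟩
    simp only [mixLeLHS, Prod.smul_mk, Pi.smul_apply, smul_eq_mul, dd_smul15 m p hp,
      RingHom.id_apply, mul_add, mul_sum]
    rw [sum_congr rfl (g := fun i => c *
      ((((S' \ SS n m S (i - 1)).card : ℝ) - ((S' \ SS n m S i).card : ℝ)) * dd m b i))
      (s₁ := Icc (p+1) m) (fun i hi => by
        rw [dd_smul15 m i (by simp at hi; omega)]; ring)]
    ring

theorem tele15 (m p k : ℕ) (hpk : p ≤ k) (hk : k ≤ m) (c : ℕ → ℝ) :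
    ∑ i ∈ Icc (p+1) m, (c (i-1) - c i) * (if i ≤ k then 1 else 0) = c p - c k := by
  have h : ∑ i ∈ Icc (p+1) m, (c (i-1) - c i) * (if i ≤ k then 1 else 0)
      = ∑ i ∈ Icc (p+1) k, (c (i-1) - c i) := by
    symm
    rw [← sum_subset (s₁ := Icc (p+1) k) (s₂ := Icc (p+1) m)]
    · apply sum_congr rfl
      intro i hi; simp at hi; simp [hi.2]
    · intro i hi; simp at hi ⊢; omega
    · intro i hi hi'; simp at hi hi'; simp; intro h; omega
  rw [h]
  clear h
  induction k, hpk using Nat.le_induction with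
  | base => simp
  | succ k hk' ih =>
    rw [sum_Icc_succ_top (by omega), ih (by omega)]
    simp

theorem g_LL15 (n m u : ℕ) (S : Fin m → Finset (Fin n)) (p : ℕ) (hp : 1 ≤ p) (hpm : p ≤ m)
    (S' : Finset (Fin n)) (k : ℕ) (hk : k ≤ m) (z : Fin n → ℝ) :
    gL15 n m u S p hp S' (z, LL15 m k) = ∑ j ∈ S', z j +
      if k < p then 0 else ((u:ℝ) - (S' \ SS n m S k).card) := by
  change mixLeLHS n m u S p S' (z, LL15 m k) = _
  simp only [mixLeLHS]
  rw [dd_LL15 m k p hp hpm, sum_congr rfl (s₁ := Icc (p+1) m) (fun i hi => by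
    rw [dd_LL15 m k i (by simp at hi; omega) (by simp at hi; omega)])]
  split_ifs with h1 h2 h2
  · omega
  · rw [tele15 m p k h1 hk (fun i => ((S' \ SS n m S i).card : ℝ))]
    ring
  · rw [sum_eq_zero (s := Icc (p+1) m)]
    · simp
    · intro i hi; simp at hi; rw [if_neg (by omega)]; simp
  · omega

theorem f_split15 {n m : ℕ} (f : ((Fin n → ℝ) × (Fin m → ℝ)) →ₗ[ℝ] ℝ) (T : Finset (Fin n))
    (d : Fin m → ℝ) : f (ind15 T, d) = ∑ j ∈ T, f (Pi.single j 1, 0) + f (0, d) := by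
  have h : (ind15 T, d) = ∑ j ∈ T, ((Pi.single j 1, 0) : (Fin n → ℝ) × (Fin m → ℝ)) + (0, d) := by
    refine Prod.ext ?_ ?_
    · funext i
      simp [ind15, Prod.fst_sum, Finset.sum_apply, Pi.single_apply]
    · simp [Prod.snd_sum]
  rw [h, map_add, map_sum]

theorem f_ext15 {n m : ℕ} (f g : ((Fin n → ℝ) × (Fin m → ℝ)) →ₗ[ℝ] ℝ)
    (h1 : ∀ j, f (Pi.single j 1, 0) = g (Pi.single j 1, 0))
    (h2 : ∀ k ≤ m, f (0, LL15 m k) = g (0, LL15 m k)) : f = g := by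
  apply LinearMap.prod_ext
  · apply LinearMap.pi_ext'
    intro j
    ext
    simpa using h1 j
  · apply LinearMap.pi_ext'
    intro i
    ext
    have hs : ((0, Pi.single i 1) : (Fin n → ℝ) × (Fin m → ℝ)) =
        (0, LL15 m (i.val+1)) - (0, LL15 m i.val) := by
      refine Prod.ext (by simp) ?_
      funext t
      simp only [LL15, Prod.snd_sub, Pi.sub_apply, Pi.single_apply, Fin.ext_iff]
      split_ifs <;> first | omega | simp
    have := i.isLt
    simp only [LinearMap.comp_apply, LinearMap.inr_apply, LinearMap.single_apply]
    rw [hs, map_sub, map_sub, h2 _ (by omega), h2 _ (by omega)]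

theorem stmt15 (n m l u : ℕ) (S : Fin m → Finset (Fin n))
    (hn : 0 < n) (hm : 0 < m) (hu : 2 ≤ u) (hlu : l < u)
    (hnested : ∀ i j : Fin m, i < j → S i ⊂ S j)
    (hS1 : 2 ≤ (SS n m S 1).card)
    (hSm : l ≤ n - (SS n m S m).card)
    (p : ℕ) (hp1 : 1 ≤ p) (hpm : p ≤ m)
    (S' : Finset (Fin n)) (hS' : (S' \ SS n m S p).card ≤ u - 1)
    (hside : p < m ∨ (SS n m S m).card < n - l)
    (hU1 : SS n m S p ⊆ S')
    (hU2 : 2 ≤ p → u ≤ (S' \ SS n m S (p - 1)).card)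
    (hU3 : u + 1 ≤ S'.card)
    (hU4 : p < m → (S' ∩ (SS n m S (p + 1) \ SS n m S p)).Nonempty) :
    IsFacet (Xset n m l u S) (mixLeLHS n m u S p S') (u : ℝ) := by
  set g := gL15 n m u S p hp1 S' with hg
  have hcard : (univ \ SS n m S m).card = n - (SS n m S m).card := by
    rw [card_sdiff_of_subset (subset_univ _)]; simp
  have hmono := SS_mono15 n m S hnested
  have hstrict := SS_strict15 n m S hnested hS1
  have hSS0 : SS n m S 0 = ∅ := by simp [SS]
  have hsumS : ∀ T : Finset (Fin n), ∑ j ∈ S', ind15 T j = ((S' ∩ T).card : ℝ) := by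
    intro T; simp [ind15]
  obtain ⟨e, he⟩ := card_pos.mp (show 0 < (SS n m S 1).card by omega)
  have heS : e ∈ S' := hU1 (hmono 1 p hp1 hpm he)
  have hpt : ∀ t, 1 ≤ t → t ≤ u → l ≤ t → ∃ x ∈ Xset n m l u S, g x = t := by
    intro t ht1 htu hlt
    obtain ⟨T, hT1, hT2, hT3⟩ := exists_subsuperset_card_eq (s := {e}) (t := S') (n := t)
      (by simpa using heS) (by simpa using ht1) (by omega)
    refine ⟨_, mem_X15 n m l u S hnested T 0 (by omega) (by simp [hSS0]) (fun _ => ?_)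
      (by omega) (by omega), ?_⟩
    · rw [not_disjoint_iff]; exact ⟨e, by simpa using he, hT1 (by simp)⟩
    · rw [hg, g_LL15 n m u S p hp1 hpm S' 0 (by omega), hsumS,
        inter_eq_right.mpr hT2, hT3, if_pos (by omega)]; simp
  obtain ⟨x0, hx0, hx0'⟩ := hpt u (by omega) le_rfl hlu.le
  obtain ⟨x1, hx1, hx1'⟩ := hpt (u-1) (by omega) (by omega) (by omega)
  refine facet_of15 (Xset n m l u S) g (u:ℝ) ?_ ?_ x0 x1 hx0 hx1 hx0' ?_
  · intro x hx
    obtain ⟨T, k, hk, hd, hc, rfl⟩ := of_X15 n m l u S hnested x hx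
    rw [hg, g_LL15 n m u S p hp1 hpm S' k hk, hsumS]
    split_ifs
    · have : (S' ∩ T).card ≤ u := (card_le_card inter_subset_right).trans hc
      have : ((S' ∩ T).card : ℝ) ≤ u := by exact_mod_cast this
      linarith
    · have : (S' ∩ T).card ≤ (S' \ SS n m S k).card := by
        apply card_le_card
        intro x hx
        simp at hx ⊢
        exact ⟨hx.1, disjoint_right.mp hd hx.2⟩
      have : ((S' ∩ T).card : ℝ) ≤ (S' \ SS n m S k).card := by exact_mod_cast this
      linarith
  · intro f γ hf
    obtain ⟨a, ha1, ha2⟩ := core15 m l u p (SS n m S) S' hu hlu hSS0 hmono hstrict hS1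
      (by rw [hcard]; exact hSm) hp1 hpm hS' (by rw [hcard]; omega) hU1 hU2 hU3 hU4
      (fun j => f (Pi.single j 1, 0)) (fun k => f (0, LL15 m k)) γ
      (by
        have : ((0, LL15 m 0) : (Fin n → ℝ) × (Fin m → ℝ)) = 0 := by
          refine Prod.ext rfl ?_
          funext i; simp [LL15]
        simp only [this, map_zero])
      (by
        intro T k hk hT hTu hd hnd
        rw [← f_split15]
        apply hf _ (mem_X15 n m l u S hnested T k (by omega) hd (fun _ => hnd) (by omega) (by omega))
        rw [hg, g_LL15 n m u S p hp1 hpm S' k (by omega), hsumS, inter_eq_right.mpr hT, hTu,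
          if_pos hk]; simp)
      (by
        intro T k hk hkm hT hl' hu' hd hnd
        rw [← f_split15]
        apply hf _ (mem_X15 n m l u S hnested T k hkm hd hnd hl' hu')
        have hi : S' ∩ T = S' \ SS n m S k := by
          ext x
          constructor
          · intro hx
            simp at hx ⊢
            exact ⟨hx.1, disjoint_right.mp hd hx.2⟩
          · intro hx
            exact mem_inter.mpr ⟨(mem_sdiff.mp hx).1, hT hx⟩
        rw [hg, g_LL15 n m u S p hp1 hpm S' k hkm, hsumS, hi, if_neg (by omega)]; ring)
    refine ⟨a, f_ext15 _ _ (fun j => ?_) (fun k hk => ?_)⟩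
    · have hL : (0 : Fin m → ℝ) = LL15 m 0 := by funext i; simp [LL15]
      have h2 : g (Pi.single j 1, 0) = if j ∈ S' then 1 else 0 := by
        rw [hL, hg, g_LL15 n m u S p hp1 hpm S' 0 (by omega), if_pos (by omega)]
        simp [Pi.single_apply]
      have h1 := ha1 j
      rw [h1, LinearMap.smul_apply, h2]
      split_ifs <;> simp
    · have h1 := ha2 k hk
      rw [h1, LinearMap.smul_apply, hg, g_LL15 n m u S p hp1 hpm S' k hk]
      split_ifs <;> simp
  · rw [hx1', Nat.cast_sub (by omega)]
    simp
end
end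

section
/- Let p ∈ I and S' ⊊ J with |S'∪S_{p−1}| ≤ n − l < |S'∪S_p|, and suppose the mixing inequality Mix≥(S',p) defines a facet of conv(X^{l,u}). Then (L1) S' ∩ S_p = ∅ and (L2) |S'| ≤ n − l − 1. -/
open Finset

noncomputable section

lemma facet_lt {E : Type*} [AddCommGroup E] [Module ℝ E] [FiniteDimensional ℝ E] (P : Set E)
    (f g : E →ₗ[ℝ] ℝ) (c : ℝ) (hf : IsFacet P f 0)
    (hg : ∀ x ∈ P, f x = 0 → g x = c)
    (x0 x1 x2 : E) (h0 : x0 ∈ P) (h1 : x1 ∈ P) (h2 : x2 ∈ P)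
    (hx0 : f x0 = 0) (hx1 : g x1 ≠ c) (hx2 : g x2 = c) (hx2' : f x2 ≠ 0) : False := by
  obtain ⟨hv, hd⟩ := hf
  have hgx0 := hg x0 h0 hx0
  have hconv : convexHull ℝ P ⊆ {x | f x ≤ 0 ∧ (f x = 0 → g x = c)} := by
    apply convexHull_min
    · intro x hx
      exact ⟨hv x hx, hg x hx⟩
    · intro x hx y hy a b ha hb hab
      obtain ⟨hx1, hx2⟩ := hx
      obtain ⟨hy1, hy2⟩ := hy
      simp only [Set.mem_setOf_eq, map_add, map_smul, smul_eq_mul]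
      have e1 : a * f x ≤ 0 := mul_nonpos_of_nonneg_of_nonpos ha hx1
      have e2 : b * f y ≤ 0 := mul_nonpos_of_nonneg_of_nonpos hb hy1
      refine ⟨by linarith, fun h => ?_⟩
      have e3 : a * f x = 0 := by linarith
      have e4 : b * f y = 0 := by linarith
      have e5 : a * g x = a * c := by
        rcases mul_eq_zero.1 e3 with h | h
        · simp [h]
        · rw [hx2 h]
      have e6 : b * g y = b * c := by
        rcases mul_eq_zero.1 e4 with h | h
        · simp [h]
        · rw [hy2 h]
      rw [e5, e6, ← add_mul, hab, one_mul]
  set F := {x ∈ convexHull ℝ P | f x = 0} with hF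
  set V := (affineSpan ℝ P).direction with hV
  have hx0F : x0 ∈ F := ⟨subset_convexHull ℝ P h0, hx0⟩
  have hWV : (affineSpan ℝ F).direction ≤ V := by
    apply AffineSubspace.direction_le
    rw [affineSpan_le]
    intro x hx
    exact convexHull_subset_affineSpan P hx.1
  have hW : (affineSpan ℝ F).direction ≤ V ⊓ LinearMap.ker g ⊓ LinearMap.ker f := by
    refine le_inf (le_inf hWV ?_) ?_
    · rw [direction_affineSpan, vectorSpan_def, Submodule.span_le]
      rintro _ ⟨x, hx, y, hy, rfl⟩
      simp [(hconv hx.1).2 hx.2, (hconv hy.1).2 hy.2]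
    · rw [direction_affineSpan, vectorSpan_def, Submodule.span_le]
      rintro _ ⟨x, hx, y, hy, rfl⟩
      simp [hx.2, hy.2]
  have hv1 : x1 - x0 ∈ V := AffineSubspace.vsub_mem_direction
    (subset_affineSpan ℝ P h1) (subset_affineSpan ℝ P h0)
  have hv2 : x2 - x0 ∈ V := AffineSubspace.vsub_mem_direction
    (subset_affineSpan ℝ P h2) (subset_affineSpan ℝ P h0)
  have l1 : V ⊓ LinearMap.ker g < V := by
    refine lt_of_le_of_ne inf_le_left fun h => ?_
    rw [← h] at hv1
    have := hv1.2
    simp [hgx0, sub_eq_zero] at this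
    exact hx1 this
  have l2 : (affineSpan ℝ F).direction < V ⊓ LinearMap.ker g := by
    refine lt_of_le_of_ne (hW.trans inf_le_left) fun h => ?_
    have hm : x2 - x0 ∈ V ⊓ LinearMap.ker g := ⟨hv2, by simp [hgx0, hx2]⟩
    rw [← h] at hm
    have := (hW hm).2
    simp [hx0] at this
    exact hx2' this
  have := Submodule.finrank_lt_finrank_of_lt l1
  have := Submodule.finrank_lt_finrank_of_lt l2
  omega

def pt (n m : ℕ) (S : Fin m → Finset (Fin n)) (T : Finset (Fin n)) :
    (Fin n → ℝ) × (Fin m → ℝ) :=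
  (fun j => if j ∈ T then 1 else 0, fun i => if Disjoint T (S i) then 1 else 0)

lemma prod_ind {n : ℕ} (T A : Finset (Fin n)) :
    (∏ j ∈ A, (1 - (if j ∈ T then (1:ℝ) else 0))) = if Disjoint T A then 1 else 0 := by
  split_ifs with h
  · apply Finset.prod_eq_one
    intro j hj
    rw [if_neg (fun hT => Finset.disjoint_left.1 h hT hj)]
    simp
  · rw [Finset.not_disjoint_iff] at h
    obtain ⟨j, hT, hA⟩ := h
    exact Finset.prod_eq_zero hA (by simp [hT])

lemma pt_mem (n m l u : ℕ) (S : Fin m → Finset (Fin n)) (T : Finset (Fin n))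
    (hl : l ≤ T.card) (hu : T.card ≤ u) : pt n m S T ∈ Xset n m l u S := by
  refine ⟨fun j => ?_, fun i => ?_, fun i => ?_, ?_, ?_⟩
  · simp only [pt]; split_ifs <;> simp
  · simp only [pt]; split_ifs <;> simp
  · simp only [pt]; rw [prod_ind]
  · simpa [pt] using hl
  · simpa [pt] using hu

lemma exists_pt (n m l u : ℕ) (S : Fin m → Finset (Fin n)) (x : (Fin n → ℝ) × (Fin m → ℝ))
    (hx : x ∈ Xset n m l u S) : ∃ T : Finset (Fin n), x = pt n m S T ∧ l ≤ T.card ∧ T.card ≤ u := by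
  obtain ⟨z, d⟩ := x
  obtain ⟨hz, _, hd, hl, hu⟩ := hx
  simp only at hz hd hl hu
  have hzT : z = fun j => if j ∈ Finset.univ.filter (fun j => z j = 1) then (1:ℝ) else 0 := by
    funext j
    rcases hz j with h | h <;> simp [h]
  set T := Finset.univ.filter (fun j => z j = 1) with hT
  rw [hzT] at hl hu
  refine ⟨T, ?_, by simpa using hl, by simpa using hu⟩
  refine Prod.ext hzT ?_
  funext i
  simp only [pt]
  rw [hd i, ← prod_ind]
  apply Finset.prod_congr rfl
  intro j _
  exact congrArg (1 - ·) (congrFun hzT j)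

lemma dd_pt (n m : ℕ) (S : Fin m → Finset (Fin n)) (T : Finset (Fin n)) (k : ℕ)
    (h1 : 1 ≤ k) (h2 : k ≤ m) :
    dd m (pt n m S T).2 k = if Disjoint T (SS n m S k) then 1 else 0 := by
  simp [dd, SS, pt, h1, h2]

lemma SS_mono (n m : ℕ) (S : Fin m → Finset (Fin n))
    (hnested : ∀ i j : Fin m, i < j → S i ⊂ S j) (a b : ℕ) (hab : a ≤ b) (hb : b ≤ m) :
    SS n m S a ⊆ SS n m S b := by
  rcases Nat.eq_zero_or_pos a with h0 | h0
  · subst h0; simp [SS]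
  rcases hab.eq_or_lt with h | h
  · rw [h]
  · have ha : 1 ≤ a ∧ a ≤ m := by omega
    have hb : 1 ≤ b ∧ b ≤ m := by omega
    simp only [SS, dif_pos ha, dif_pos hb]
    exact (hnested _ _ (by rw [Fin.mk_lt_mk]; omega)).1

lemma dd_lin (m : ℕ) (k : ℕ) (h1 : 1 ≤ k) (h2 : k ≤ m) :
    (∀ a b : Fin m → ℝ, dd m (a + b) k = dd m a k + dd m b k) ∧
    (∀ (c : ℝ) (a : Fin m → ℝ), dd m (c • a) k = c * dd m a k) := by
  simp [dd, h1, h2]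

lemma mix_lin (n m l : ℕ) (S : Fin m → Finset (Fin n)) (p : ℕ) (hp1 : 1 ≤ p) (hpm : p ≤ m)
    (S' : Finset (Fin n)) : IsLinearMap ℝ (mixGeLHS n m l S p S') := by
  constructor
  · intro x y
    simp only [mixGeLHS, Prod.fst_add, Prod.snd_add, (dd_lin m p hp1 hpm).1, Pi.add_apply,
      Finset.sum_add_distrib]
    rw [Finset.sum_congr rfl (fun i hi => by
      rw [(dd_lin m i (by simp at hi; omega) (by simp at hi; omega)).1, mul_add]),
      Finset.sum_add_distrib]
    ring
  · intro c x
    simp only [mixGeLHS, Prod.smul_fst, Prod.smul_snd, (dd_lin m p hp1 hpm).2, Pi.smul_apply,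
      smul_eq_mul, ← Finset.mul_sum]
    rw [Finset.sum_congr rfl (fun i hi => by
      rw [(dd_lin m i (by simp at hi; omega) (by simp at hi; omega)).2, mul_left_comm]),
      ← Finset.mul_sum]
    ring

lemma mix_pt (n m l : ℕ) (S : Fin m → Finset (Fin n)) (p : ℕ) (hp1 : 1 ≤ p) (hpm : p ≤ m)
    (S' T : Finset (Fin n)) : mixGeLHS n m l S p S' (pt n m S T) =
    (((S' ∪ SS n m S p).card : ℝ) - (n : ℝ) + (l : ℝ)) *
        (if Disjoint T (SS n m S p) then 1 else 0)
    + ∑ i ∈ Finset.Icc (p + 1) m,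
        (((S' ∪ SS n m S i).card : ℝ) - ((S' ∪ SS n m S (i - 1)).card : ℝ)) *
          (if Disjoint T (SS n m S i) then 1 else 0)
    - ((S' ∩ T).card : ℝ) := by
  unfold mixGeLHS
  rw [dd_pt _ _ _ _ _ hp1 hpm, Finset.sum_congr rfl (fun i hi => by
      rw [dd_pt _ _ _ _ _ (by simp at hi; omega) (by simp at hi; omega)])]
  simp [pt]

lemma mix_pt0 (n m l : ℕ) (S : Fin m → Finset (Fin n))
    (hnested : ∀ i j : Fin m, i < j → S i ⊂ S j) (p : ℕ) (hp1 : 1 ≤ p) (hpm : p ≤ m)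
    (S' T : Finset (Fin n)) (h : ¬ Disjoint T (SS n m S p)) :
    mixGeLHS n m l S p S' (pt n m S T) = - ((S' ∩ T).card : ℝ) := by
  rw [mix_pt _ _ _ _ _ hp1 hpm, if_neg h, Finset.sum_eq_zero]
  · simp
  · intro i hi
    simp only [Finset.mem_Icc] at hi
    rw [if_neg, mul_zero]
    exact fun hd => h (hd.mono_right (SS_mono n m S hnested p i (by omega) hi.2))

theorem stmt16 (n m l u : ℕ) (S : Fin m → Finset (Fin n))
    (hn : 0 < n) (hm : 0 < m) (hu : 2 ≤ u) (hlu : l < u)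
    (hnested : ∀ i j : Fin m, i < j → S i ⊂ S j)
    (hS1 : 2 ≤ (SS n m S 1).card)
    (hSm : l ≤ n - (SS n m S m).card)
    (p : ℕ) (hp1 : 1 ≤ p) (hpm : p ≤ m)
    (S' : Finset (Fin n)) (hS'ne : S' ≠ Finset.univ)
    (h1 : (S' ∪ SS n m S (p - 1)).card ≤ n - l)
    (h2 : n - l < (S' ∪ SS n m S p).card)
    (hfacet : IsFacet (Xset n m l u S) (mixGeLHS n m l S p S') 0) :
    S' ∩ SS n m S p = ∅ ∧ S'.card ≤ n - l - 1 := by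
  have hcn : ∀ A : Finset (Fin n), A.card ≤ n := fun A => by simpa using Finset.card_le_univ A
  have hmono := SS_mono n m S hnested
  have hSp2 : 2 ≤ (SS n m S p).card := hS1.trans (Finset.card_le_card (hmono 1 p hp1 hpm))
  have hSpm : (SS n m S p).card ≤ (SS n m S m).card := Finset.card_le_card (hmono p m hpm le_rfl)
  have hS'c : S'.card ≤ n - l := (Finset.card_le_card Finset.subset_union_left).trans h1
  have hmn := hcn (SS n m S m)
  let fL := IsLinearMap.mk' _ (mix_lin n m l S p hp1 hpm S')
  have hfL : ∀ x, fL x = mixGeLHS n m l S p S' x := fun x => rfl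
  have hfac : IsFacet (Xset n m l u S) fL 0 := hfacet
  have hm0 := mix_pt0 n m l S hnested p hp1 hpm S'
  -- an element of S_p outside S'
  obtain ⟨j0, hj0p, hj0⟩ : ∃ j0 ∈ SS n m S p, j0 ∉ S' := by
    by_contra! hc
    rw [Finset.union_eq_left.2 (fun j hj => hc j hj)] at h2
    omega
  -- an element of S' outside S_p
  obtain ⟨j1, hj1, hj1p⟩ : ∃ j1 ∈ S', j1 ∉ SS n m S p := by
    by_contra! hc
    rw [Finset.union_eq_right.2 (fun j hj => hc j hj)] at h2
    omega
  -- base point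
  obtain ⟨T0, hT0j, hT0S, hT0c⟩ : ∃ T : Finset (Fin n), {j0} ⊆ T ∧ T ⊆ S'ᶜ ∧ T.card = max l 1 := by
    apply Finset.exists_subsuperset_card_eq (by simpa using hj0)
    · simp
    · rw [Finset.card_compl, Fintype.card_fin]
      have : 0 < (S'ᶜ).card := Finset.card_pos.2 ⟨j0, by simpa using hj0⟩
      rw [Finset.card_compl, Fintype.card_fin] at this
      omega
  have hT0 : pt n m S T0 ∈ Xset n m l u S := pt_mem _ _ _ _ _ _ (by omega) (by omega)
  have hT0f : fL (pt n m S T0) = 0 := by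
    rw [hfL, hm0 _ (Finset.not_disjoint_iff.2 ⟨j0, hT0j (by simp), hj0p⟩)]
    have : S' ∩ T0 = ∅ := by
      rw [← Finset.disjoint_iff_inter_eq_empty, Finset.disjoint_right]
      intro a ha
      simpa using hT0S ha
    simp [this]
  have hL1 : S' ∩ SS n m S p = ∅ := by
    by_contra hne
    obtain ⟨j, hj⟩ := Finset.nonempty_iff_ne_empty.2 hne
    rw [Finset.mem_inter] at hj
    obtain ⟨hjS, hjp⟩ := hj
    -- x1
    obtain ⟨T1, hT1j, -, hT1c⟩ : ∃ T : Finset (Fin n), {j} ⊆ T ∧ T ⊆ univ ∧ T.card = max l 1 := by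
      apply Finset.exists_subsuperset_card_eq (by simp)
      · simp
      · simp; omega
    obtain ⟨T2, hT2j, hT2S, hT2c⟩ :
        ∃ T : Finset (Fin n), {j0, j1} ⊆ T ∧ T ⊆ univ.erase j ∧ T.card = max l 2 := by
      apply Finset.exists_subsuperset_card_eq
      · intro a ha
        simp only [Finset.mem_insert, Finset.mem_singleton] at ha
        simp only [Finset.mem_erase, Finset.mem_univ, and_true]
        rintro rfl
        rcases ha with rfl | rfl
        · exact hj0 hjS
        · exact hj1p hjp
      · exact Finset.card_le_two.trans (by omega)
      · have : (insert j1 (SS n m S p)).card ≤ n := hcn _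
        rw [Finset.card_insert_of_notMem hj1p] at this
        rw [Finset.card_erase_of_mem (Finset.mem_univ _), Finset.card_univ, Fintype.card_fin]
        omega
    let g : ((Fin n → ℝ) × (Fin m → ℝ)) →ₗ[ℝ] ℝ := LinearMap.proj j ∘ₗ LinearMap.fst ℝ _ _
    have hg : ∀ T, g (pt n m S T) = if j ∈ T then 1 else 0 := fun T => rfl
    refine facet_lt (Xset n m l u S) fL g 0 hfac ?_ (pt n m S T0) (pt n m S T1) (pt n m S T2)
      hT0 (pt_mem _ _ _ _ _ _ (by omega) (by omega)) (pt_mem _ _ _ _ _ _ (by omega) (by omega))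
      hT0f ?_ ?_ ?_
    · intro x hx hfx
      obtain ⟨T, rfl, hTl, hTu⟩ := exists_pt _ _ _ _ _ _ hx
      rw [hg, if_neg]
      intro hjT
      rw [hfL, hm0 _ (Finset.not_disjoint_iff.2 ⟨j, hjT, hjp⟩)] at hfx
      simp only [neg_eq_zero, Nat.cast_eq_zero, Finset.card_eq_zero] at hfx
      have : j ∈ S' ∩ T := Finset.mem_inter.2 ⟨hjS, hjT⟩
      simp [hfx] at this
    · rw [hg, if_pos (hT1j (by simp))]; simp
    · rw [hg, if_neg]
      intro h
      simpa using hT2S h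
    · rw [hfL, hm0 _ (Finset.not_disjoint_iff.2 ⟨j0, hT2j (by simp), hj0p⟩)]
      simp only [ne_eq, neg_eq_zero, Nat.cast_eq_zero, Finset.card_eq_zero]
      intro h
      have : j1 ∈ S' ∩ T2 := Finset.mem_inter.2 ⟨hj1, hT2j (by simp)⟩
      simp [h] at this
  refine ⟨hL1, ?_⟩
  by_contra hc
  have hS'pos : 0 < S'.card := Finset.card_pos.2 ⟨j1, hj1⟩
  have hS'eq : S'.card = n - l := by omega
  have hun : (S' ∪ SS n m S p).card = S'.card + (SS n m S p).card :=
    Finset.card_union_of_disjoint (Finset.disjoint_iff_inter_eq_empty.2 hL1)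
  have hunn := hcn (S' ∪ SS n m S p)
  have hl2 : 2 ≤ l := by omega
  have hj01 : j0 ≠ j1 := fun h => hj0 (h ▸ hj1)
  obtain ⟨T1, hT1c⟩ : ∃ T : Finset (Fin n), T.card = l + 1 := by
    obtain ⟨T, -, hT⟩ := Finset.exists_subset_card_eq (s := (univ : Finset (Fin n))) (n := l + 1)
      (by simp; omega)
    exact ⟨T, hT⟩
  obtain ⟨T2, hT2j, -, hT2c⟩ :
      ∃ T : Finset (Fin n), {j0, j1} ⊆ T ∧ T ⊆ univ ∧ T.card = l := by
    apply Finset.exists_subsuperset_card_eq (by simp)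
    · exact Finset.card_le_two.trans (by omega)
    · simp; omega
  let g : ((Fin n → ℝ) × (Fin m → ℝ)) →ₗ[ℝ] ℝ :=
    (∑ j, LinearMap.proj j) ∘ₗ LinearMap.fst ℝ (Fin n → ℝ) (Fin m → ℝ)
  have hg : ∀ T, g (pt n m S T) = (T.card : ℝ) := fun T => by simp [g, pt]
  refine facet_lt (Xset n m l u S) fL g l hfac ?_ (pt n m S T0) (pt n m S T1) (pt n m S T2)
    hT0 (pt_mem _ _ _ _ _ _ (by omega) (by omega)) (pt_mem _ _ _ _ _ _ (by omega) (by omega))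
    hT0f ?_ ?_ ?_
  · intro x hx hfx
    obtain ⟨T, rfl, hTl, hTu⟩ := exists_pt _ _ _ _ _ _ hx
    rw [hg]
    norm_cast
    rw [hfL] at hfx
    by_cases hd : Disjoint T (SS n m S p)
    · by_contra hTne
      have hcoef : ∀ i ∈ Finset.Icc (p + 1) m,
          (0:ℝ) ≤ ((S' ∪ SS n m S i).card : ℝ) - ((S' ∪ SS n m S (i - 1)).card : ℝ) := by
        intro i hi
        simp only [Finset.mem_Icc] at hi
        rw [sub_nonneg]
        exact_mod_cast Finset.card_le_card
          (Finset.union_subset_union_right (hmono (i-1) i (by omega) hi.2))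
      have hcp : (0:ℝ) < ((S' ∪ SS n m S p).card : ℝ) - (n : ℝ) + (l : ℝ) := by
        have : n < (S' ∪ SS n m S p).card + l := by omega
        have : (n:ℝ) < (S' ∪ SS n m S p).card + l := by exact_mod_cast this
        linarith
      have hne : (S' ∩ T).Nonempty := by
        by_contra hemp
        rw [Finset.not_nonempty_iff_eq_empty] at hemp
        rw [mix_pt _ _ _ _ _ hp1 hpm, if_pos hd, hemp] at hfx
        have : (0:ℝ) ≤ ∑ i ∈ Finset.Icc (p + 1) m,
          (((S' ∪ SS n m S i).card : ℝ) - ((S' ∪ SS n m S (i - 1)).card : ℝ)) *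
          (if Disjoint T (SS n m S i) then 1 else 0) := by
          apply Finset.sum_nonneg
          intro i hi
          exact mul_nonneg (hcoef i hi) (by split_ifs <;> simp)
        simp only [Finset.card_empty, Nat.cast_zero, mul_one, sub_zero] at hfx
        linarith
      obtain ⟨k, hk⟩ := hne
      have hkT := (Finset.mem_inter.1 hk).2
      have hec := Finset.card_erase_of_mem hkT
      have hval := hfacet.1 (pt n m S (T.erase k)) (pt_mem _ _ _ _ _ _ (by omega) (by omega))
      have hsub : T.erase k ⊆ T := Finset.erase_subset _ _
      rw [mix_pt _ _ _ _ _ hp1 hpm, if_pos (hd.mono_left hsub)] at hval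
      rw [mix_pt _ _ _ _ _ hp1 hpm, if_pos hd] at hfx
      have hle : ∑ i ∈ Finset.Icc (p + 1) m,
          (((S' ∪ SS n m S i).card : ℝ) - ((S' ∪ SS n m S (i - 1)).card : ℝ)) *
          (if Disjoint T (SS n m S i) then 1 else 0) ≤ ∑ i ∈ Finset.Icc (p + 1) m,
          (((S' ∪ SS n m S i).card : ℝ) - ((S' ∪ SS n m S (i - 1)).card : ℝ)) *
          (if Disjoint (T.erase k) (SS n m S i) then 1 else 0) := by
        apply Finset.sum_le_sum
        intro i hi
        apply mul_le_mul_of_nonneg_left _ (hcoef i hi)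
        by_cases hdi : Disjoint T (SS n m S i)
        · rw [if_pos hdi, if_pos (hdi.mono_left hsub)]
        · rw [if_neg hdi]; split_ifs <;> simp
      have hlt : ((S' ∩ T.erase k).card : ℝ) < ((S' ∩ T).card : ℝ) := by
        rw [Finset.inter_erase]
        exact_mod_cast Finset.card_erase_lt_of_mem hk
      linarith
    · rw [hm0 _ hd] at hfx
      simp only [neg_eq_zero, Nat.cast_eq_zero] at hfx
      have h3 := hcn (S' ∪ T)
      rw [Finset.card_union_of_disjoint
        (Finset.disjoint_iff_inter_eq_empty.2 (Finset.card_eq_zero.1 hfx))] at h3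
      omega
  · rw [hg, hT1c]; norm_cast; omega
  · rw [hg, hT2c]
  · rw [hfL, hm0 _ (Finset.not_disjoint_iff.2 ⟨j0, hT2j (by simp), hj0p⟩)]
    simp only [ne_eq, neg_eq_zero, Nat.cast_eq_zero, Finset.card_eq_zero]
    intro h
    have : j1 ∈ S' ∩ T2 := Finset.mem_inter.2 ⟨hj1, hT2j (by simp)⟩
    simp [h] at this
end
end

section
/- Let t ≥ 1 and let i_1,…,i_t ∈ I be distinct indices, writing S_{[k]} = S_{i_k} and δ_{[k]} = δ_{i_k}. Let S' ⊆ J and suppose |S'∖(S_{[1]}∩S_{[i]})| ≤ u for every i ∈ {2,…,t}. Then the inequality Σ_{j∈S'} z_j + (u − |S'∖S_{[1]}|)·δ_{[1]} + Σ_{i=2}^{t} |S' ∩ S_{[i]} ∖ (S_{[1]}∪⋯∪S_{[i−1]})|·δ_{[i]} ≤ u holds for every (z,δ) ∈ X^{l,u}. -/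
open Finset

noncomputable section

theorem stmt18 (n m l u t : ℕ) (S : Fin m → Finset (Fin n))
    (hn : 0 < n) (hm : 0 < m) (hlu : l ≤ u) (hu : 2 ≤ u)
    (hdist : Function.Injective S)
    (hcard : ∀ i, 1 ≤ (S i).card ∧ (S i).card ≤ n - l)
    (ht : 0 < t) (idx : Fin t → Fin m) (hinj : Function.Injective idx)
    (S' : Finset (Fin n))
    (hcond : ∀ k : Fin t, 0 < (k : ℕ) →
      (S' \ (S (idx ⟨0, ht⟩) ∩ S (idx k))).card ≤ u) :
    ∀ zd ∈ Xset n m l u S,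
      ∑ j ∈ S', zd.1 j
        + ((u : ℝ) - ((S' \ S (idx ⟨0, ht⟩)).card : ℝ)) * zd.2 (idx ⟨0, ht⟩)
        + ∑ k ∈ Finset.univ.filter (fun k : Fin t => 0 < (k : ℕ)),
            ((((S' ∩ S (idx k)) \
                (Finset.univ.filter (fun k' : Fin t => k' < k)).biUnion
                  (fun k' => S (idx k'))).card : ℝ)) * zd.2 (idx k)
      ≤ (u : ℝ) := by
  rintro ⟨z, d⟩ ⟨hz, hd, hprod, -, hsum⟩
  simp only at hz hd hprod hsum ⊢
  have hzn : ∀ j, 0 ≤ z j := fun j => by rcases hz j with h | h <;> simp [h]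
  have hz1 : ∀ j, z j ≤ 1 := fun j => by rcases hz j with h | h <;> simp [h]
  have hzero : ∀ i, d i = 1 → ∀ j ∈ S i, z j = 0 := by
    intro i hi j hj
    rcases hz j with h | h
    · exact h
    · have h0 := hprod i
      rw [Finset.prod_eq_zero hj (by simp [h]), hi] at h0
      norm_num at h0
  set A : Fin t → Finset (Fin n) := fun k => (S' ∩ S (idx k)) \
    (Finset.univ.filter (fun k' : Fin t => k' < k)).biUnion (fun k' => S (idx k')) with hA
  set K : Finset (Fin t) := Finset.univ.filter (fun k : Fin t => 0 < (k : ℕ)) with hK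
  have memA : ∀ k j, j ∈ A k ↔ (j ∈ S' ∧ j ∈ S (idx k)) ∧ ∀ k' < k, j ∉ S (idx k') := by
    intro k j
    simp [hA]
  have hA0 : ∀ k ∈ K, ∀ j ∈ A k, j ∉ S (idx ⟨0, ht⟩) := by
    intro k hk j hj
    refine ((memA k j).1 hj).2 _ ?_
    have : 0 < (k : ℕ) := by simpa [hK] using hk
    exact this
  have huniq : ∀ k k' j, j ∈ A k → j ∈ A k' → k = k' := by
    intro k k' j h h'
    rw [memA] at h h'
    rcases lt_trichotomy k k' with hl | hl | hl
    · exact absurd h.1.2 (h'.2 _ hl)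
    · exact hl
    · exact absurd h'.1.2 (h.2 _ hl)
  set c : Fin n → ℝ := fun j => z j + ∑ k ∈ K, (if j ∈ A k then d (idx k) else 0) with hc
  have hc1 : ∀ j, c j ≤ 1 := by
    intro j
    by_cases hex : ∃ k ∈ K, j ∈ A k
    · obtain ⟨k, hk, hj⟩ := hex
      have : ∑ k ∈ K, (if j ∈ A k then d (idx k) else 0) = d (idx k) := by
        rw [Finset.sum_eq_single_of_mem k hk, if_pos hj]
        intro b _ hb
        exact if_neg fun h => hb (huniq _ _ _ h hj)
      simp only [hc, this]
      rcases hd (idx k) with h | h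
      · rw [h]; linarith [hz1 j]
      · rw [h, hzero _ h j ((memA k j).1 hj).1.2]; norm_num
    · have : ∑ k ∈ K, (if j ∈ A k then d (idx k) else 0) = 0 :=
        Finset.sum_eq_zero fun k hk => if_neg fun h => hex ⟨k, hk, h⟩
      simp only [hc, this]
      linarith [hz1 j]
  have hc0 : ∀ j ∈ S (idx ⟨0, ht⟩), z j = 0 → c j = 0 := by
    intro j hj hzj
    have : ∑ k ∈ K, (if j ∈ A k then d (idx k) else 0) = 0 :=
      Finset.sum_eq_zero fun k hk => if_neg fun h => hA0 k hk j h hj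
    simp only [hc, this, hzj, add_zero]
  have htot : ∑ j ∈ S', c j = ∑ j ∈ S', z j + ∑ k ∈ K, ((A k).card : ℝ) * d (idx k) := by
    simp only [hc, Finset.sum_add_distrib]
    congr 1
    rw [Finset.sum_comm]
    refine Finset.sum_congr rfl fun k _ => ?_
    rw [← Finset.sum_filter, Finset.sum_const, nsmul_eq_mul]
    congr 3
    ext j
    simp only [Finset.mem_filter]
    exact ⟨fun h => h.2, fun h => ⟨((memA k j).1 h).1.1, h⟩⟩
  have hbound : ∀ T : Finset (Fin n), (∀ j ∈ T, c j = 0) →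
      ∑ j ∈ S', c j ≤ ((S' \ T).card : ℝ) := by
    intro T hT
    have h1 : ∑ j ∈ S' \ T, c j = ∑ j ∈ S', c j := by
      refine Finset.sum_subset Finset.sdiff_subset fun j hj hn' => hT j ?_
      by_contra hjT
      exact hn' (Finset.mem_sdiff.2 ⟨hj, hjT⟩)
    rw [← h1]
    calc ∑ j ∈ S' \ T, c j ≤ ∑ j ∈ S' \ T, (1 : ℝ) := Finset.sum_le_sum fun j _ => hc1 j
      _ = _ := by simp
  rcases hd (idx ⟨0, ht⟩) with h0 | h0
  · rw [h0, mul_zero, add_zero]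
    by_cases hex : ∃ k ∈ K, d (idx k) = 1
    · obtain ⟨k, hk, hdk⟩ := hex
      have hk0 : 0 < (k : ℕ) := by simpa [hK] using hk
      have h1 := hbound (S (idx ⟨0, ht⟩) ∩ S (idx k)) fun j hj =>
        hc0 j (Finset.mem_inter.1 hj).1 (hzero _ hdk j (Finset.mem_inter.1 hj).2)
      have h2 : ((S' \ (S (idx ⟨0, ht⟩) ∩ S (idx k))).card : ℝ) ≤ u := by
        exact_mod_cast hcond k hk0
      linarith
    · have h1 : ∑ k ∈ K, ((A k).card : ℝ) * d (idx k) = 0 := by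
        refine Finset.sum_eq_zero fun k hk => ?_
        rcases hd (idx k) with h | h
        · rw [h, mul_zero]
        · exact absurd ⟨k, hk, h⟩ hex
      have h2 : ∑ j ∈ S', z j ≤ ∑ j, z j :=
        Finset.sum_le_sum_of_subset_of_nonneg (Finset.subset_univ _) fun j _ _ => hzn j
      linarith
  · have h1 := hbound (S (idx ⟨0, ht⟩)) fun j hj => hc0 j hj (hzero _ h0 j hj)
    rw [h0, mul_one]
    linarith
end
end

section
/- Let t ≥ 1 and let i_1,…,i_t ∈ I be distinct indices, writing S_{[k]} = S_{i_k} and δ_{[k]} = δ_{i_k}. Let S' ⊆ J and suppose |S'∪(S_{[1]}∩S_{[i]})| ≥ n − l for every i ∈ {2,…,t}. Then the inequality −Σ_{j∈S'} z_j + (|S'∪S_{[1]}| − n + l)·δ_{[1]} + Σ_{i=2}^{t} |S_{[i]} ∖ (S_{[1]}∪⋯∪S_{[i−1]}) ∖ S'|·δ_{[i]} ≤ 0 holds for every (z,δ) ∈ X^{l,u}. -/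
open Finset

noncomputable section

theorem aux19 (n m l t : ℕ) (S : Fin m → Finset (Fin n))
    (ht : 0 < t) (idx : Fin t → Fin m) (S' C : Finset (Fin n))
    (z : Fin n → ℝ) (d : Fin m → ℝ)
    (hz : ∀ j, z j = 0 ∨ z j = 1) (hd : ∀ i, d i = 0 ∨ d i = 1)
    (hzd : ∀ i, d i = 1 → ∀ j ∈ S i, z j = 0)
    (hl : (l : ℝ) ≤ ∑ j, z j)
    (hC : C ⊆ S (idx ⟨0, ht⟩)) (hCz : ∀ j ∈ C, z j = 0) :
    ((S' ∪ C).card : ℝ) + ∑ k ∈ Finset.univ.filter (fun k : Fin t => 0 < (k : ℕ)),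
            ((((S (idx k) \
                (Finset.univ.filter (fun k' : Fin t => k' < k)).biUnion
                  (fun k' => S (idx k'))) \ S').card : ℝ)) * d (idx k)
      ≤ (n : ℝ) - l + ∑ j ∈ S', z j := by
  classical
  set T : Fin t → Finset (Fin n) := fun k => (S (idx k) \
                (Finset.univ.filter (fun k' : Fin t => k' < k)).biUnion
                  (fun k' => S (idx k'))) \ S' with hT
  have hTm : ∀ k j, j ∈ T k ↔ (j ∈ S (idx k) ∧ ∀ k' < k, j ∉ S (idx k')) ∧ j ∉ S' := by
    intro k j
    simp [hT]
  set A := Finset.univ.filter (fun k : Fin t => 0 < (k : ℕ) ∧ d (idx k) = 1) with hA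
  have hsum : ∑ k ∈ Finset.univ.filter (fun k : Fin t => 0 < (k : ℕ)),
      ((T k).card : ℝ) * d (idx k) = ((A.biUnion T).card : ℝ) := by
    rw [Finset.card_biUnion]
    · push_cast
      rw [hA, ← Finset.filter_filter, Finset.sum_filter (fun k : Fin t => d (idx k) = 1)]
      refine Finset.sum_congr rfl fun k _ => ?_
      rcases hd (idx k) with h | h <;> simp [h]
    · intro a _ b _ hab
      rw [Function.onFun, Finset.disjoint_left]
      intro j hj hj'
      rw [hTm] at hj hj'
      rcases lt_or_gt_of_ne hab with h | h
      · exact hj'.1.2 a h hj.1.1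
      · exact hj.1.2 b h hj'.1.1
  rw [hsum]
  have hWz : ∀ j ∈ A.biUnion T, z j = 0 := by
    intro j hj
    simp only [Finset.mem_biUnion, hTm] at hj
    obtain ⟨k, hk, hj⟩ := hj
    exact hzd _ (Finset.mem_filter.1 hk).2.2 j hj.1.1
  have hdisj : Disjoint (S' ∪ C) (A.biUnion T) := by
    rw [Finset.disjoint_left]
    intro j hj hj'
    simp only [Finset.mem_biUnion, hTm] at hj'
    obtain ⟨k, hk, hj'⟩ := hj'
    rcases Finset.mem_union.1 hj with h | h
    · exact hj'.2 h
    · exact hj'.1.2 ⟨0, ht⟩ (by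
        rw [Fin.lt_def]; exact (Finset.mem_filter.1 hk).2.1) (hC h)
  have h1 : ∑ j ∈ S', z j = ∑ j ∈ (S' ∪ C) ∪ A.biUnion T, z j := by
    apply Finset.sum_subset
    · intro j hj; simp [hj]
    · intro j hj hj'
      rcases Finset.mem_union.1 hj with h | h
      · rcases Finset.mem_union.1 h with h | h
        · exact absurd h hj'
        · exact hCz j h
      · exact hWz j h
  have h2 : ∑ j ∈ (S' ∪ C) ∪ A.biUnion T, (1 - z j) ≤ ∑ j, (1 - z j) := by
    apply Finset.sum_le_sum_of_subset_of_nonneg (Finset.subset_univ _)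
    intro j _ _
    rcases hz j with h | h <;> simp [h]
  rw [Finset.sum_sub_distrib, Finset.sum_sub_distrib, ← h1] at h2
  simp only [Finset.sum_const, nsmul_eq_mul, mul_one, Finset.card_union_of_disjoint hdisj,
    Finset.card_univ, Fintype.card_fin] at h2
  push_cast at h2
  linarith

theorem stmt19 (n m l u t : ℕ) (S : Fin m → Finset (Fin n))
    (hn : 0 < n) (hm : 0 < m) (hlu : l ≤ u) (hu : 2 ≤ u)
    (hdist : Function.Injective S)
    (hcard : ∀ i, 1 ≤ (S i).card ∧ (S i).card ≤ n - l)
    (ht : 0 < t) (idx : Fin t → Fin m) (hinj : Function.Injective idx)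
    (S' : Finset (Fin n))
    (hcond : ∀ k : Fin t, 0 < (k : ℕ) →
      n - l ≤ (S' ∪ (S (idx ⟨0, ht⟩) ∩ S (idx k))).card) :
    ∀ zd ∈ Xset n m l u S,
      -(∑ j ∈ S', zd.1 j)
        + (((S' ∪ S (idx ⟨0, ht⟩)).card : ℝ) - (n : ℝ) + (l : ℝ)) * zd.2 (idx ⟨0, ht⟩)
        + ∑ k ∈ Finset.univ.filter (fun k : Fin t => 0 < (k : ℕ)),
            ((((S (idx k) \
                (Finset.univ.filter (fun k' : Fin t => k' < k)).biUnion
                  (fun k' => S (idx k'))) \ S').card : ℝ)) * zd.2 (idx k)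
      ≤ 0 := by
  rintro ⟨z, d⟩ ⟨hz, hd, hp, hl, -⟩
  simp only at hz hd hp hl ⊢
  have hzd : ∀ i, d i = 1 → ∀ j ∈ S i, z j = 0 := by
    intro i hi j hj
    rcases hz j with h | h
    · exact h
    · have : ∏ j ∈ S i, (1 - z j) = 0 := Finset.prod_eq_zero hj (by simp [h])
      rw [← hp, hi] at this
      exact absurd this one_ne_zero
  have key := fun C => aux19 n m l t S ht idx S' C z d hz hd hzd hl
  rcases hd (idx ⟨0, ht⟩) with h0 | h0
  · by_cases hA : ∃ k : Fin t, 0 < (k : ℕ) ∧ d (idx k) = 1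
    · obtain ⟨k, hk, hk1⟩ := hA
      have := key (S (idx ⟨0, ht⟩) ∩ S (idx k)) Finset.inter_subset_left
        (fun j hj => hzd _ hk1 j (Finset.mem_inter.1 hj).2)
      have hc : (n : ℝ) ≤ (S' ∪ (S (idx ⟨0, ht⟩) ∩ S (idx k))).card + (l : ℝ) := by
        have := hcond k hk
        exact_mod_cast (by omega)
      rw [h0]
      linarith
    · push Not at hA
      have hs : 0 ≤ ∑ j ∈ S', z j := Finset.sum_nonneg fun j _ => by
        rcases hz j with h | h <;> simp [h]
      rw [h0, Finset.sum_eq_zero (s := Finset.univ.filter (fun k : Fin t => 0 < (k : ℕ)))]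
      · linarith
      · intro k hk
        have := hA k (Finset.mem_filter.1 hk).2
        rw [(hd (idx k)).resolve_right this, mul_zero]
  · have := key (S (idx ⟨0, ht⟩)) subset_rfl (hzd _ h0)
    rw [h0]
    linarith
end
end
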